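/- Let V₀, V_h ∈ ℝ with V̄ := V_h - V₀ ≠ 0, V_c := (V₀ + V_h)/2, and let 0 ≤ x₁ ≤ x₂ ≤ h. Define the piecewise linear potential V̂ equal to the linear interpolation from V₀ to V_c on [0,x₁], constantly V_c on [x₁,x₂], and the linear interpolation from V_c to V_h on [x₂,h]. Set α = x₁/h, β = (h - x₂)/h. If α/β = (e^{V̄/2} - V̄/2 - 1)/(e^{-V̄/2} + V̄/2 - 1), then (1/h)∫₀^h e^{V̂(x)} dx = e^{(V₀+V_h)/2}, i.e., the harmonic integral average of π = e^{-V̂} equals the geometric mean √(π₀ π_h). -/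

import Mathlib

/-!
Rescaled to the unit interval, a ramp of `V̂` from `u` to `v` contributes its length times
`∫₀¹ e^{u + (v - u)s} ds`. Relative to either endpoint value this is `e^u M(v - u) = e^v M(u - v)`,
where `M(t) = ∫₀¹ e^{ts} ds`. Measuring both ramps against the plateau value `V_c` gives
`(1/h)∫₀ʰ e^{V̂} = e^{V_c} (1 + α (M(V₀ - V_c) - 1) + β (M(V_h - V_c) - 1))`,
so the mean equals `e^{V_c}` exactly when the two corrections cancel. For `V_c = (V₀ + V_h)/2` they
are taken at `∓V̄/2`, and `M(t) - 1 = (e^t - t - 1)/t` turns cancellation into the ratio condition.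
-/

open MeasureTheory Set

section PiecewiseIntegrals

variable {E : Type*} {f g : ℝ → E} {μ : Measure ℝ} {a b c : ℝ}

theorem eqOn_uIoc_ite_le_left (hab : a ≤ b) :
    EqOn f (fun x ↦ if x ≤ b then f x else g x) (uIoc a b) := fun _ hx ↦
  (if_pos (uIoc_of_le hab ▸ hx).2).symm

theorem eqOn_uIoc_ite_le_right (hbc : b ≤ c) :
    EqOn g (fun x ↦ if x ≤ b then f x else g x) (uIoc b c) := fun _ hx ↦
  (if_neg (uIoc_of_le hbc ▸ hx).1.not_ge).symm

theorem intervalIntegrable_ite_le [NormedAddCommGroup E] (hab : a ≤ b) (hbc : b ≤ c)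
    (hf : IntervalIntegrable f μ a b) (hg : IntervalIntegrable g μ b c) :
    IntervalIntegrable (fun x ↦ if x ≤ b then f x else g x) μ a c :=
  (hf.congr (eqOn_uIoc_ite_le_left hab)).trans (hg.congr (eqOn_uIoc_ite_le_right hbc))

theorem integral_ite_le [NormedAddCommGroup E] [NormedSpace ℝ E] (hab : a ≤ b) (hbc : b ≤ c)
    (hf : IntervalIntegrable f μ a b) (hg : IntervalIntegrable g μ b c) :
    ∫ x in a..c, (if x ≤ b then f x else g x) ∂μ =
      (∫ x in a..b, f x ∂μ) + ∫ x in b..c, g x ∂μ := by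
  rw [← intervalIntegral.integral_add_adjacent_intervals
      (hf.congr (eqOn_uIoc_ite_le_left hab)) (hg.congr (eqOn_uIoc_ite_le_right hbc)),
    ← intervalIntegral.integral_congr_ae (.of_forall (eqOn_uIoc_ite_le_left hab)),
    ← intervalIntegral.integral_congr_ae (.of_forall (eqOn_uIoc_ite_le_right hbc))]

end PiecewiseIntegrals

section Ramps

variable {E : Type*} [NormedAddCommGroup E] [NormedSpace ℝ E]

theorem integral_comp_ramp (f : ℝ → E) (p q u v : ℝ) :
    ∫ x in p..q, f (u + (v - u) / (q - p) * (x - p)) =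
      (q - p) • ∫ s in (0 : ℝ)..1, f (u + (v - u) * s) := by
  rcases eq_or_ne p q with rfl | hpq
  · simp
  have hqp : q - p ≠ 0 := sub_ne_zero.2 hpq.symm
  have hsubst := intervalIntegral.smul_integral_comp_add_mul
    (a := 0) (b := 1) (fun x ↦ f (u + (v - u) / (q - p) * (x - p))) (q - p) p
  simpa [← mul_assoc, hqp] using hsubst.symm

/-- The piecewise affine potential that runs from `V₀` to `Vc` on `[0, x₁]`, stays at `Vc` on
`[x₁, x₂]`, and runs from `Vc` to `Vh` on `[x₂, h]`; the plateau value `Vc` is arbitrary.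
A ramp of zero length has slope `0` by the convention `y / 0 = 0`, so the potential may then be
discontinuous or miss the value `Vh`. -/
noncomputable def plateauPotential (V₀ Vc Vh x₁ x₂ h x : ℝ) : ℝ :=
  if x ≤ x₁ then V₀ + (Vc - V₀) / x₁ * x
  else if x ≤ x₂ then Vc
  else Vc + (Vh - Vc) / (h - x₂) * (x - x₂)

theorem integral_comp_plateauPotential [CompleteSpace E] {f : ℝ → E} (hf : Continuous f)
    (V₀ Vc Vh : ℝ) {x₁ x₂ h : ℝ} (h0 : 0 ≤ x₁) (h12 : x₁ ≤ x₂) (h2h : x₂ ≤ h) :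
    ∫ x in (0 : ℝ)..h, f (plateauPotential V₀ Vc Vh x₁ x₂ h x) =
      (x₁ • ∫ s in (0 : ℝ)..1, f (V₀ + (Vc - V₀) * s)) + ((x₂ - x₁) • f Vc +
        (h - x₂) • ∫ s in (0 : ℝ)..1, f (Vc + (Vh - Vc) * s)) := by
  have hramp (u k q a b : ℝ) :
      IntervalIntegrable (fun x ↦ f (u + k * (x - q))) volume a b :=
    (by fun_prop : Continuous fun x ↦ f (u + k * (x - q))).intervalIntegrable a b
  have hleft := integral_comp_ramp f 0 x₁ V₀ Vc
  have hleft_int := hramp V₀ ((Vc - V₀) / x₁) 0 0 x₁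
  simp only [sub_zero] at hleft hleft_int
  have hconst : IntervalIntegrable (fun _ ↦ f Vc) volume x₁ x₂ := intervalIntegrable_const
  have hright_int := hramp Vc ((Vh - Vc) / (h - x₂)) x₂ x₂ h
  simp only [plateauPotential, apply_ite f]
  rw [integral_ite_le h0 (h12.trans h2h) hleft_int
      (intervalIntegrable_ite_le h12 h2h hconst hright_int),
    integral_ite_le h12 h2h hconst hright_int, hleft, intervalIntegral.integral_const,
    integral_comp_ramp]

end Ramps

/-- The mean of the exponential along an affine ramp from `0` to `t`. The mean over a ramp from
`u` to `u + t` is `exp u` times it. -/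
noncomputable def expRampMean (t : ℝ) : ℝ := ∫ s in (0 : ℝ)..1, Real.exp (t * s)

theorem expRampMean_sub_one {t : ℝ} (ht : t ≠ 0) :
    expRampMean t - 1 = (Real.exp t - t - 1) / t := by
  rw [expRampMean, intervalIntegral.integral_comp_mul_left _ ht, integral_exp, mul_zero, mul_one,
    Real.exp_zero, smul_eq_mul]
  field_simp
  ring

theorem integral_exp_ramp_eq_exp_start_mul (u v : ℝ) :
    ∫ s in (0 : ℝ)..1, Real.exp (u + (v - u) * s) = Real.exp u * expRampMean (v - u) := by
  simp only [Real.exp_add, intervalIntegral.integral_const_mul, expRampMean]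

theorem integral_exp_ramp_eq_exp_end_mul (u v : ℝ) :
    ∫ s in (0 : ℝ)..1, Real.exp (u + (v - u) * s) = Real.exp v * expRampMean (u - v) := by
  have hreverse := intervalIntegral.integral_comp_sub_left
    (a := 0) (b := 1) (fun s ↦ Real.exp (u + (v - u) * s)) 1
  rw [sub_self, sub_zero] at hreverse
  rw [← hreverse, ← integral_exp_ramp_eq_exp_start_mul]
  congr! 3
  ring

theorem average_exp_plateauPotential (V₀ Vc Vh : ℝ) {x₁ x₂ h : ℝ} (hh : h ≠ 0)
    (h0 : 0 ≤ x₁) (h12 : x₁ ≤ x₂) (h2h : x₂ ≤ h) :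
    (1 / h) * ∫ x in (0 : ℝ)..h, Real.exp (plateauPotential V₀ Vc Vh x₁ x₂ h x) =
      Real.exp Vc * (1 + (x₁ / h * (expRampMean (V₀ - Vc) - 1) +
        (h - x₂) / h * (expRampMean (Vh - Vc) - 1))) := by
  rw [integral_comp_plateauPotential Real.continuous_exp V₀ Vc Vh h0 h12 h2h,
    integral_exp_ramp_eq_exp_end_mul, integral_exp_ramp_eq_exp_start_mul]
  simp only [smul_eq_mul]
  field_simp
  ring

theorem sqra_mean_from_piecewise_potential_general (V₀ Vc Vh : ℝ) {x₁ x₂ h : ℝ} (hh : h ≠ 0)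
    (h0 : 0 ≤ x₁) (h12 : x₁ ≤ x₂) (h2h : x₂ ≤ h) :
    (1 / h) * ∫ x in (0 : ℝ)..h, Real.exp (plateauPotential V₀ Vc Vh x₁ x₂ h x) = Real.exp Vc ↔
      x₁ / h * (expRampMean (V₀ - Vc) - 1) + (h - x₂) / h * (expRampMean (Vh - Vc) - 1) = 0 := by
  rw [average_exp_plateauPotential V₀ Vc Vh hh h0 h12 h2h, mul_eq_left₀ (Real.exp_ne_zero Vc),
    add_eq_left]

theorem expRampMean_balance_of_div_eq {α β d : ℝ} (hd : d ≠ 0)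
    (hratio : α / β = (Real.exp d - d - 1) / (Real.exp (-d) + d - 1)) :
    α * (expRampMean (-d) - 1) + β * (expRampMean d - 1) = 0 := by
  have hnum : 0 < Real.exp d - d - 1 := by linarith [Real.add_one_lt_exp hd]
  have hden : 0 < Real.exp (-d) + d - 1 := by linarith [Real.add_one_lt_exp (neg_ne_zero.2 hd)]
  have hβ : β ≠ 0 := by
    rintro rfl
    exact (div_pos hnum hden).ne (by rw [← hratio, div_zero])
  rw [div_eq_div_iff hβ hden.ne'] at hratio
  rw [expRampMean_sub_one (neg_ne_zero.2 hd), expRampMean_sub_one hd]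
  field_simp
  linear_combination -hratio

theorem expRampMean_balance_midpoint {α β u v : ℝ} (huv : v - u ≠ 0)
    (hratio : α / β = (Real.exp ((v - u) / 2) - (v - u) / 2 - 1) /
      (Real.exp (-(v - u) / 2) + (v - u) / 2 - 1)) :
    α * (expRampMean (u - (u + v) / 2) - 1) + β * (expRampMean (v - (u + v) / 2) - 1) = 0 := by
  have hleft : u - (u + v) / 2 = -((v - u) / 2) := by ring
  have hright : v - (u + v) / 2 = (v - u) / 2 := by ring
  rw [neg_div] at hratio
  rw [hleft, hright]
  exact expRampMean_balance_of_div_eq (div_ne_zero huv two_ne_zero) hratio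

/-- The piecewise affine potential rising from `V₀` to `V_c := (V₀+V_h)/2` on `[0,x₁]`,
constant `V_c` on `[x₁,x₂]`, and rising from `V_c` to `V_h` on `[x₂,h]`, with
`α = x₁/h`, `β = (h-x₂)/h` satisfying the ratio condition
`α/β = (e^{V̄/2} - V̄/2 - 1)/(e^{-V̄/2} + V̄/2 - 1)` (with `V̄ = V_h - V₀ ≠ 0`),
generates the SQRA (geometric) mean: `(1/h)∫₀ʰ e^{V̂} = e^{(V₀+V_h)/2}`. -/
theorem sqra_mean_from_piecewise_potential (h x₁ x₂ V₀ Vh : ℝ)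
    (hh : 0 < h) (h0 : 0 ≤ x₁) (h12 : x₁ ≤ x₂) (h2h : x₂ ≤ h)
    (hV : Vh - V₀ ≠ 0)
    (hratio : (x₁ / h) / ((h - x₂) / h) =
      (Real.exp ((Vh - V₀) / 2) - (Vh - V₀) / 2 - 1) /
        (Real.exp (-(Vh - V₀) / 2) + (Vh - V₀) / 2 - 1)) :
    (1 / h) * ∫ x in (0:ℝ)..h,
        Real.exp (if x ≤ x₁ then V₀ + ((V₀ + Vh) / 2 - V₀) / x₁ * x
          else if x ≤ x₂ then (V₀ + Vh) / 2
          else (V₀ + Vh) / 2 + (Vh - (V₀ + Vh) / 2) / (h - x₂) * (x - x₂)) =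
      Real.exp ((V₀ + Vh) / 2) :=
  (sqra_mean_from_piecewise_potential_general V₀ _ Vh hh.ne' h0 h12 h2h).2
    (expRampMean_balance_midpoint hV hratio)
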